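/- arXiv:2308.10914 — 2 statements merged into one kernel-verified Lean document; each statement's English description precedes it below -/
import Mathlib

section
/- Let Ω be a set, 𝒮 a semi-ring of subsets of Ω, and F = (ν_j)_{j∈J} a family of signed charges on 𝒮 satisfying the admissibility hypothesis. Then μ_F is a signed charge on 𝒮 (it is both super-additive and sub-additive on finite disjoint unions within 𝒮, and μ_F > -∞), and μ_F is the least upper bound of F in the pointwise order on signed charges: ν_j ≤ μ_F for all j, and if λ is a signed charge on 𝒮 with ν_j ≤ λ for all j ∈ J, then μ_F ≤ λ. -/
/-!
Write `g A = ⨆ j, ν j A`. Each `ν j` is additive and addition on `EReal` is monotone, so `g` is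
subadditive on finite partitions (`iSup_charge_le`): refining a partition can only increase the
sum of `g` over it.

* Subadditivity of `μ_F` on a disjoint union `⋃ i, A i` (`supFun_iUnion_le`): cut every piece of a
  partition of the union along the sets `A i`; the traces on `A i` form a partition of `A i`.
* Superadditivity (`sum_supFun_le`): the union of partitions of disjoint sets is a partition of
  their union.
* A charge dominating every `ν j` dominates `g`, hence the sum of `g` over any partition of `A` is
  at most the value of that charge at `A`.

A partition is a `Finset` of sets, so pieces arising in different ways may coincide as sets; this
only happens for the empty set, which contributes `g ∅ = 0`. Admissibility makes `J` nonempty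
(whence `g ∅ = 0`) and keeps `μ_F` away from `⊥`.
-/

open MeasureTheory Set
open scoped ENNReal NNReal BigOperators

namespace SignedCharges

variable {Ω : Type*}

/-- `P` is a finite partition of `A` by elements of the family `S`. -/
def IsPartition (S : Set (Set Ω)) (A : Set Ω) (P : Finset (Set Ω)) : Prop :=
  ↑P ⊆ S ∧ (P : Set (Set Ω)).PairwiseDisjoint id ∧ ⋃₀ ↑P = A

/-- The partition-supremum `μ_F` of a family `F = (ν j)` of `EReal`-valued set functions:
`μ_F(A) = sup` over finite partitions `Π` of `A` by elements of `S` of `Σ_{C ∈ Π} sup_j ν j C`. -/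
noncomputable def supFun {J : Type*} (S : Set (Set Ω)) (ν : J → Set Ω → EReal)
    (A : Set Ω) : EReal :=
  ⨆ P : Finset (Set Ω), ⨆ _ : IsPartition S A P, ∑ C ∈ P, ⨆ j, ν j C

/-- The admissibility hypothesis: `sup_j ν j A > -∞` for every `A ∈ S`. -/
def Admissible {J : Type*} (S : Set (Set Ω)) (ν : J → Set Ω → EReal) : Prop :=
  ∀ A ∈ S, ⊥ < ⨆ j, ν j A

/-- An `EReal`-valued signed charge on `S`: vanishes on `∅`, finitely additive on finite
disjoint unions within `S`, and omits at least one of the values `+∞`, `-∞` on `S`. -/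
structure IsCharge (S : Set (Set Ω)) (μ : Set Ω → EReal) : Prop where
  empty : μ ∅ = 0
  additive : ∀ (n : ℕ) (A : Fin n → Set Ω), (∀ i, A i ∈ S) →
    Pairwise (Function.onFun Disjoint A) → (⋃ i, A i) ∈ S → μ (⋃ i, A i) = ∑ i, μ (A i)
  omits : (∀ A ∈ S, μ A ≠ ⊤) ∨ (∀ A ∈ S, μ A ≠ ⊥)

/-- A finite (real-valued) signed charge on `S`. -/
structure IsRealCharge (S : Set (Set Ω)) (μ : Set Ω → ℝ) : Prop where
  empty : μ ∅ = 0
  additive : ∀ (n : ℕ) (A : Fin n → Set Ω), (∀ i, A i ∈ S) →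
    Pairwise (Function.onFun Disjoint A) → (⋃ i, A i) ∈ S → μ (⋃ i, A i) = ∑ i, μ (A i)

/-- Countable additivity for a real-valued set function (unconditional convergence). -/
def CountablyAdditiveR (S : Set (Set Ω)) (μ : Set Ω → ℝ) : Prop :=
  ∀ A : ℕ → Set Ω, (∀ n, A n ∈ S) → Pairwise (Function.onFun Disjoint A) →
    (⋃ n, A n) ∈ S → HasSum (fun n => μ (A n)) (μ (⋃ n, A n))

/-- Countable sub-additivity for an `EReal`-valued set function. -/
def CountablySubadditiveE (S : Set (Set Ω)) (μ : Set Ω → EReal) : Prop :=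
  ∀ A : ℕ → Set Ω, (∀ n, A n ∈ S) → Pairwise (Function.onFun Disjoint A) →
    (⋃ n, A n) ∈ S → μ (⋃ n, A n) ≤ ∑' n, μ (A n)

/-- Countable additivity for an `EReal`-valued set function. -/
def CountablyAdditiveE (S : Set (Set Ω)) (μ : Set Ω → EReal) : Prop :=
  ∀ A : ℕ → Set Ω, (∀ n, A n ∈ S) → Pairwise (Function.onFun Disjoint A) →
    (⋃ n, A n) ∈ S → μ (⋃ n, A n) = ∑' n, μ (A n)

/-- `μ⁺ = μ ∨ 0` : sup over finite partitions of `Σ_{C} max (μ C) 0`. -/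
noncomputable def pos (S : Set (Set Ω)) (μ : Set Ω → EReal) (A : Set Ω) : EReal :=
  ⨆ P : Finset (Set Ω), ⨆ _ : IsPartition S A P, ∑ C ∈ P, max (μ C) 0

/-- `μ⁻ = (-μ) ∨ 0` : sup over finite partitions of `Σ_{C} max (-μ C) 0`. -/
noncomputable def neg (S : Set (Set Ω)) (μ : Set Ω → EReal) (A : Set Ω) : EReal :=
  ⨆ P : Finset (Set Ω), ⨆ _ : IsPartition S A P, ∑ C ∈ P, max (-μ C) 0

/-- The variation `|μ|` : sup over finite partitions of `Σ_{C} |μ C|`. -/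
noncomputable def var (S : Set (Set Ω)) (μ : Set Ω → EReal) (A : Set Ω) : EReal :=
  ⨆ P : Finset (Set Ω), ⨆ _ : IsPartition S A P, ∑ C ∈ P, max (μ C) (-μ C)

/-- The infimum `α ∧ β` of two nonnegative charges:
inf over finite partitions of `Σ_{C} min (α C) (β C)`. -/
noncomputable def infC (S : Set (Set Ω)) (α β : Set Ω → EReal) (A : Set Ω) : EReal :=
  ⨅ P : Finset (Set Ω), ⨅ _ : IsPartition S A P, ∑ C ∈ P, min (α C) (β C)

/-- The ring generated by a semi-ring: finite unions of elements of `S`. -/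
def genRing (S : Set (Set Ω)) : Set (Set Ω) :=
  {A | ∃ P : Finset (Set Ω), ↑P ⊆ S ∧ A = ⋃₀ ↑P}

/-- Coercion of a real-valued set function to an `EReal`-valued one. -/
def toE (μ : Set Ω → ℝ) : Set Ω → EReal := fun A => (μ A : EReal)

/-- `μ` has finite variation on `S`. -/
def FiniteVar (S : Set (Set Ω)) (μ : Set Ω → ℝ) : Prop :=
  ∀ A ∈ S, var S (toE μ) A ≠ ⊤

/-- Additivity of a charge, stated for an arbitrary finite index type instead of `Fin n`. -/
lemma IsCharge.additive_fintype {Ω ι : Type*} [Fintype ι] {S : Set (Set Ω)} {μ : Set Ω → EReal}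
    (hμ : IsCharge S μ) (A : ι → Set Ω) (hA : ∀ i, A i ∈ S)
    (hd : Pairwise (Function.onFun Disjoint A)) (hU : (⋃ i, A i) ∈ S) :
    μ (⋃ i, A i) = ∑ i, μ (A i) := by
  let e := (Fintype.equivFin ι).symm
  have hU' : (⋃ k, A (e k)) = ⋃ i, A i := e.surjective.iUnion_comp A
  have h := hμ.additive _ (fun k => A (e k)) (fun k => hA _)
    (fun k l hkl => hd (e.injective.ne hkl)) (hU' ▸ hU)
  rw [hU'] at h
  rw [h]
  exact e.sum_comp (fun i => μ (A i))

lemma IsCharge.sum_partition {Ω : Type*} {S : Set (Set Ω)} {μ : Set Ω → EReal}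
    (hμ : IsCharge S μ) {A : Set Ω} (hA : A ∈ S) {P : Finset (Set Ω)} (hP : IsPartition S A P) :
    μ A = ∑ C ∈ P, μ C := by
  obtain ⟨hPS, hPd, rfl⟩ := hP
  have hU : (⋃ C : P, (C : Set Ω)) = ⋃₀ (P : Set (Set Ω)) := by
    ext x; simp
  have h := hμ.additive_fintype (fun C : P => (C : Set Ω)) (fun C => hPS C.2)
    (fun C D hCD => hPd C.2 D.2 (fun h => hCD (Subtype.ext h))) (hU ▸ hA)
  rw [hU] at h
  rw [h]
  exact Finset.sum_coe_sort P μ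

lemma iSup_charge_le {Ω J ι : Type*} [Fintype ι] {S : Set (Set Ω)} {ν : J → Set Ω → EReal}
    (hν : ∀ j, IsCharge S (ν j)) (A : ι → Set Ω) (hA : ∀ i, A i ∈ S)
    (hd : Pairwise (Function.onFun Disjoint A)) (hU : (⋃ i, A i) ∈ S) :
    ⨆ j, ν j (⋃ i, A i) ≤ ∑ i, ⨆ j, ν j (A i) := by
  refine iSup_le fun j => ?_
  rw [(hν j).additive_fintype A hA hd hU]
  exact Finset.sum_le_sum fun i _ => le_iSup (fun j => ν j (A i)) j

lemma iSup_charge_empty {Ω J : Type*} {S : Set (Set Ω)} (hS : IsSetSemiring S)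
    {ν : J → Set Ω → EReal} (hν : ∀ j, IsCharge S (ν j)) (hadm : Admissible S ν) :
    ⨆ j, ν j ∅ = 0 := by
  have hJ : Nonempty J := by
    by_contra hJ
    rw [not_nonempty_iff] at hJ
    simpa using hadm ∅ hS.empty_mem
  simp [(hν _).empty]

lemma IsPartition.sum_le_supFun {Ω J : Type*} {S : Set (Set Ω)} (ν : J → Set Ω → EReal)
    {A : Set Ω} {P : Finset (Set Ω)} (hP : IsPartition S A P) :
    ∑ C ∈ P, ⨆ j, ν j C ≤ supFun S ν A :=
  le_iSup₂ (f := fun P (_ : IsPartition S A P) => ∑ C ∈ P, ⨆ j, ν j C) P hP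

lemma isPartition_singleton {Ω : Type*} {S : Set (Set Ω)} {A : Set Ω} (hA : A ∈ S) :
    IsPartition S A {A} := by
  refine ⟨by simpa using hA, by simp, by simp⟩

lemma iSup_le_supFun {Ω J : Type*} {S : Set (Set Ω)} (ν : J → Set Ω → EReal)
    {A : Set Ω} (hA : A ∈ S) : ⨆ j, ν j A ≤ supFun S ν A := by
  simpa using (isPartition_singleton hA).sum_le_supFun ν

lemma supFun_empty {Ω J : Type*} {S : Set (Set Ω)} {ν : J → Set Ω → EReal}
    (h0 : ⨆ j, ν j ∅ = 0) : supFun S ν ∅ = 0 := by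
  apply le_antisymm
  · refine iSup₂_le fun P hP => (Finset.sum_eq_zero fun C hC => ?_).le
    rw [sUnion_eq_empty.mp hP.2.2 C hC, h0]
  · have h : IsPartition S ∅ ∅ := ⟨by simp, by simp, by simp⟩
    simpa using h.sum_le_supFun ν

lemma supFun_iUnion_le {Ω J ι : Type*} [Fintype ι] {S : Set (Set Ω)} (hS : IsSetSemiring S)
    {ν : J → Set Ω → EReal} (hν : ∀ j, IsCharge S (ν j)) (h0 : ⨆ j, ν j ∅ = 0)
    (A : ι → Set Ω) (hA : ∀ i, A i ∈ S) (hd : Pairwise (Function.onFun Disjoint A)) :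
    supFun S ν (⋃ i, A i) ≤ ∑ i, supFun S ν (A i) := by
  classical
  refine iSup₂_le fun P hP => ?_
  obtain ⟨hPS, hPd, hPU⟩ := hP
  calc ∑ C ∈ P, ⨆ j, ν j C
      ≤ ∑ C ∈ P, ∑ i, ⨆ j, ν j (C ∩ A i) := by
        refine Finset.sum_le_sum fun C hC => ?_
        have hCU : (⋃ i, C ∩ A i) = C := by
          rw [← inter_iUnion, ← hPU]
          exact inter_eq_left.mpr (subset_sUnion_of_mem hC)
        have h := iSup_charge_le hν (fun i => C ∩ A i)
          (fun i => hS.inter_mem _ (hPS hC) _ (hA i))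
          (fun i k hik => (hd hik).mono inter_subset_right inter_subset_right)
          (hCU.symm ▸ hPS hC)
        rwa [hCU] at h
    _ = ∑ i, ∑ C ∈ P, ⨆ j, ν j (C ∩ A i) := Finset.sum_comm
    _ ≤ ∑ i, supFun S ν (A i) := by
        refine Finset.sum_le_sum fun i _ => ?_
        have hpart : IsPartition S (A i) (P.image (· ∩ A i)) := by
          refine ⟨?_, ?_, ?_⟩
          · intro D hD
            obtain ⟨C, hC, rfl⟩ := Finset.mem_image.mp hD
            exact hS.inter_mem _ (hPS hC) _ (hA i)
          · intro D hD E hE hDE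
            obtain ⟨C, hC, rfl⟩ := Finset.mem_image.mp hD
            obtain ⟨C', hC', rfl⟩ := Finset.mem_image.mp hE
            exact (hPd hC hC' fun h => hDE (by rw [h])).mono inter_subset_left inter_subset_left
          · rw [Finset.coe_image, sUnion_image, ← iUnion₂_inter, ← sUnion_eq_biUnion, hPU]
            exact inter_eq_right.mpr (subset_iUnion A i)
        refine le_of_eq_of_le (Eq.symm ?_) (hpart.sum_le_supFun ν)
        -- Two distinct pieces with the same trace on `A i` are disjoint, so that trace is empty.
        refine Finset.sum_image_of_pairwise_eq_zero fun C hC D hD hCD h => ?_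
        have hdis : Disjoint (C ∩ A i) (D ∩ A i) :=
          (hPd hC hD hCD).mono inter_subset_left inter_subset_left
        have h' : C ∩ A i = D ∩ A i := h
        rw [← h', disjoint_self] at hdis
        rw [hdis]
        exact h0

/-- The sets need not belong to `S`: `supFun` is `⊥` on sets without a partition. -/
lemma supFun_add_le {Ω J : Type*} {S : Set (Set Ω)} {ν : J → Set Ω → EReal}
    (h0 : ⨆ j, ν j ∅ = 0) {A B : Set Ω} (hAB : Disjoint A B) :
    supFun S ν A + supFun S ν B ≤ supFun S ν (A ∪ B) := by
  classical
  refine EReal.add_le_of_forall_lt fun a ha b hb => ?_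
  simp only [supFun, lt_iSup_iff] at ha
  obtain ⟨P, hP, haP⟩ := ha
  simp only [supFun, lt_iSup_iff] at hb
  obtain ⟨Q, hQ, hbQ⟩ := hb
  have hdis : ∀ C ∈ P, ∀ D ∈ Q, Disjoint C D := fun C hC D hD =>
    hAB.mono (hP.2.2 ▸ subset_sUnion_of_mem hC) (hQ.2.2 ▸ subset_sUnion_of_mem hD)
  have hPQ : IsPartition S (A ∪ B) (P ∪ Q) := by
    refine ⟨?_, ?_, ?_⟩
    · rw [Finset.coe_union]
      exact union_subset hP.1 hQ.1
    · rw [Finset.coe_union]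
      exact pairwiseDisjoint_union.mpr
        ⟨hP.2.1, hQ.2.1, fun C hC D hD _ => hdis C hC D hD⟩
    · rw [Finset.coe_union, sUnion_union, hP.2.2, hQ.2.2]
  have hinter : ∑ C ∈ P ∩ Q, ⨆ j, ν j C = 0 := by
    refine Finset.sum_eq_zero fun C hC => ?_
    rw [Finset.mem_inter] at hC
    have hC0 : C = ∅ := disjoint_self.mp (hdis C hC.1 C hC.2)
    rw [hC0, h0]
  calc a + b ≤ ∑ C ∈ P, (⨆ j, ν j C) + ∑ C ∈ Q, ⨆ j, ν j C := add_le_add haP.le hbQ.le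
    _ = ∑ C ∈ P ∪ Q, ⨆ j, ν j C := by
        rw [← Finset.sum_union_inter, hinter, add_zero]
    _ ≤ supFun S ν (A ∪ B) := hPQ.sum_le_supFun ν

lemma sum_supFun_le {Ω J ι : Type*} {S : Set (Set Ω)} {ν : J → Set Ω → EReal}
    (h0 : ⨆ j, ν j ∅ = 0) (A : ι → Set Ω) (hd : Pairwise (Function.onFun Disjoint A))
    (s : Finset ι) : ∑ i ∈ s, supFun S ν (A i) ≤ supFun S ν (⋃ i ∈ s, A i) := by
  classical
  induction s using Finset.induction_on with
  | empty => simp [supFun_empty h0]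
  | insert i s hi ih =>
    rw [Finset.sum_insert hi, Finset.set_biUnion_insert]
    refine (add_le_add le_rfl ih).trans (supFun_add_le h0 ?_)
    refine disjoint_iUnion₂_right.mpr fun k hk => hd ?_
    rintro rfl
    exact hi hk

/-- for an admissible family of signed charges, `μ_F` is a signed charge,
`μ_F > -∞`, and `μ_F` is the least upper bound of the family in the pointwise order. -/
theorem statement1 {Ω J : Type*} (S : Set (Set Ω)) (hS : MeasureTheory.IsSetSemiring S)
    (ν : J → Set Ω → EReal) (hν : ∀ j, IsCharge S (ν j)) (hadm : Admissible S ν) :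
    IsCharge S (supFun S ν) ∧
    (∀ A ∈ S, ⊥ < supFun S ν A) ∧
    (∀ j, ∀ A ∈ S, ν j A ≤ supFun S ν A) ∧
    (∀ lam : Set Ω → EReal, IsCharge S lam → (∀ j, ∀ A ∈ S, ν j A ≤ lam A) →
      ∀ A ∈ S, supFun S ν A ≤ lam A) := by
  have h0 := iSup_charge_empty hS hν hadm
  have hbot : ∀ A ∈ S, ⊥ < supFun S ν A := fun A hA =>
    (hadm A hA).trans_le (iSup_le_supFun ν hA)
  refine ⟨⟨supFun_empty h0, fun n A hA hd _ => ?_, Or.inr fun A hA => (hbot A hA).ne'⟩, hbot,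
    fun j A hA => (le_iSup (fun j => ν j A) j).trans (iSup_le_supFun ν hA),
    fun lam hlam hle A hA => iSup₂_le fun P hP => ?_⟩
  · refine le_antisymm (supFun_iUnion_le hS hν h0 A hA hd) ?_
    simpa using sum_supFun_le (S := S) h0 A hd Finset.univ
  · rw [hlam.sum_partition hA hP]
    exact Finset.sum_le_sum fun C hC => iSup_le fun j => hle j C (hP.1 hC)

end SignedCharges
end

section
/- Let 𝒮 be a semi-ring, μ a finite-variation signed measure on 𝒮, and ν a finite-variation signed charge on 𝒮 with 0 ≤ ν ≤ μ pointwise. Then ν is countably additive, i.e. ν is a signed measure on 𝒮. (The key step showing ca(𝒮) is an ideal in fa(𝒮).) -/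
/-!
Let `A = ⋃ n, A n` be a disjoint union in `S`. For a finite set `t` of indices the semi-ring
property writes `A \ ⋃ n ∈ t, A n` as a finite disjoint union of members of `S`; summing
`0 ≤ ν C ≤ μ C` over these pieces and using finite additivity of both charges
(`IsRealCharge.exists_remainder`) gives
`0 ≤ ν A - ∑ n ∈ t, ν (A n) ≤ μ A - ∑ n ∈ t, μ (A n)`.
The right-hand side tends to `0` along finite sets `t` because `μ` is countably additive, so the
partial sums of `ν (A n)` converge to `ν A`.
-/

open MeasureTheory Set
open scoped ENNReal NNReal BigOperators

namespace SignedCharges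

variable {Ω : Type*}

/-- A finite signed charge as a Mathlib additive content. Additivity over `Fin n`-indexed families
becomes additivity over finite sets of sets by enumerating them. -/
def IsRealCharge.toAddContent {S : Set (Set Ω)} {m : Set Ω → ℝ} (hm : IsRealCharge S m) :
    AddContent ℝ S where
  toFun := m
  empty' := hm.empty
  sUnion' I hI hdis hmem := by
    let e := I.equivFin.symm
    have hU : ⋃ i, (e i : Set Ω) = ⋃₀ ↑I := by
      rw [e.surjective.iUnion_comp (fun x : I => (x : Set Ω)), sUnion_eq_iUnion]
      rfl
    rw [← hU, hm.additive _ (fun i => (e i : Set Ω)) (fun i => hI (e i).2) _ (hU ▸ hmem),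
      e.sum_comp (fun x : I => m x), Finset.sum_coe_sort I m]
    intro i j hij
    exact hdis (e i).2 (e j).2 fun h => hij (e.injective (Subtype.ext h))

/-- The remainder `(⋃ n, A n) \ ⋃ n ∈ t, A n` splits into finitely many members of `S`. The family
`J` of pieces depends only on the sets, so the same `J` serves for all charges at once. -/
lemma IsRealCharge.exists_remainder {S : Set (Set Ω)} (hS : IsSetSemiring S) (A : ℕ → Set Ω)
    (hA : ∀ n, A n ∈ S) (hdis : Pairwise (Function.onFun Disjoint A)) (hU : (⋃ n, A n) ∈ S)
    (t : Finset ℕ) :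
    ∃ J : Finset (Set Ω), ↑J ⊆ S ∧ ∀ m : Set Ω → ℝ, IsRealCharge S m →
      m (⋃ n, A n) = ∑ n ∈ t, m (A n) + ∑ C ∈ J, m C := by
  classical
  have hI : (↑(t.image A) : Set (Set Ω)) ⊆ S := by
    intro C hC
    obtain ⟨n, -, rfl⟩ := Finset.mem_image.1 (Finset.mem_coe.1 hC)
    exact hA n
  refine ⟨hS.disjointOfDiffUnion hU hI, hS.disjointOfDiffUnion_subset hU hI, fun m hm => ?_⟩
  have hsub : ∀ C ∈ t.image A, C ⊆ ⋃ n, A n := by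
    intro C hC
    obtain ⟨n, -, rfl⟩ := Finset.mem_image.1 hC
    exact subset_iUnion A n
  have hd : (↑(t.image A) : Set (Set Ω)).PairwiseDisjoint id := by
    rw [Finset.coe_image]
    rintro _ ⟨i, -, rfl⟩ _ ⟨j, -, rfl⟩ hij
    exact hdis fun h => hij (congrArg A h)
  have key : m (⋃ n, A n) = ∑ C ∈ t.image A, m C + ∑ C ∈ hS.disjointOfDiffUnion hU hI, m C :=
    addContent_eq_add_disjointOfDiffUnion_of_subset (m := hm.toAddContent) hS hU hI hsub hd
  -- `A` need not be injective, but repeated values are empty and carry no mass.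
  rwa [Finset.sum_image_of_disjoint hm.empty (hdis.pairwiseDisjoint _)] at key

/-- a finite-variation signed charge squeezed between `0` and a
finite-variation signed measure is countably additive. -/
theorem statement9 {Ω : Type*} (S : Set (Set Ω)) (hS : MeasureTheory.IsSetSemiring S)
    (μ : Set Ω → ℝ) (hμ : IsRealCharge S μ) (hμca : CountablyAdditiveR S μ)
    (hμv : FiniteVar S μ)
    (ν : Set Ω → ℝ) (hν : IsRealCharge S ν) (hνv : FiniteVar S ν)
    (h0 : ∀ A ∈ S, 0 ≤ ν A) (hle : ∀ A ∈ S, ν A ≤ μ A) :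
    CountablyAdditiveR S ν := by
  intro A hA hdis hU
  have hsum : Filter.Tendsto (fun t : Finset ℕ => ∑ n ∈ t, μ (A n)) Filter.atTop
      (nhds (μ (⋃ n, A n))) := hμca A hA hdis hU
  have hlow : Filter.Tendsto
      (fun t : Finset ℕ => ν (⋃ n, A n) - (μ (⋃ n, A n) - ∑ n ∈ t, μ (A n)))
      Filter.atTop (nhds (ν (⋃ n, A n))) := by
    have h := Filter.Tendsto.const_sub (ν (⋃ n, A n))
      (Filter.Tendsto.const_sub (μ (⋃ n, A n)) hsum)
    simpa using h
  refine tendsto_of_tendsto_of_tendsto_of_le_of_le hlow tendsto_const_nhds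
    (fun t => ?_) (fun t => ?_)
  all_goals
    obtain ⟨J, hJ, hrem⟩ := IsRealCharge.exists_remainder hS A hA hdis hU t
    have h1 := hrem μ hμ
    have h2 := hrem ν hν
    have h3 : 0 ≤ ∑ C ∈ J, ν C := Finset.sum_nonneg fun C hC => h0 C (hJ hC)
    have h4 : ∑ C ∈ J, ν C ≤ ∑ C ∈ J, μ C := Finset.sum_le_sum fun C hC => hle C (hJ hC)
    dsimp only
    linarith

end SignedCharges
end
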